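/- Let T > 0, let q : ℝ → ℝ be T-periodic and locally integrable satisfying (q*), and let g ∈ C¹([0,∞)) satisfy (g*) together with g(s)/s → +∞ as s → +∞. Then for every r > 0 there exist a constant R > r, a nonnegative T-periodic locally integrable function v with v not identically zero (a.e.), and a constant ν₀ > 0, such that: (i) for every ν ∈ [0, ν₀], every nonnegative T-periodic solution u of u'' + q(t) g(u) + ν v(t) = 0 satisfies sup over t of |u(t)| ≠ R; and (ii) for ν = ν₀ there is no T-periodic solution u of u'' + q(t) g(u) + ν v(t) = 0 with 0 ≤ u(t) ≤ R for all t ∈ ℝ. -/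

import Mathlib

open MeasureTheory Set Filter

/-- `u` is a solution of `u'' + F(t,u) = 0`: `u` is of class `C¹` and its derivative `u'`
is locally absolutely continuous (it is the integral of a locally integrable function),
with `u'' + F(t, u(t)) = 0` for a.e. `t`. -/
def IsSol (F : ℝ → ℝ → ℝ) (u : ℝ → ℝ) : Prop :=
  ∃ u' : ℝ → ℝ,
    (∀ t, HasDerivAt u (u' t) t) ∧
    MeasureTheory.LocallyIntegrable (fun s => F s (u s)) MeasureTheory.volume ∧
    ∀ t, u' t = u' 0 - ∫ s in (0:ℝ)..t, F s (u s)

/-- `q ≻ 0` on `I` : `q ≥ 0` a.e. on `I` and `q ≢ 0` on `I`. -/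
def PosOn (q : ℝ → ℝ) (I : Set ℝ) : Prop :=
  (∀ᵐ t ∂(MeasureTheory.volume.restrict I), 0 ≤ q t) ∧
  ¬ (∀ᵐ t ∂(MeasureTheory.volume.restrict I), q t = 0)

/-- Condition `(q*)`: `[0,T]` splits into `m` closed intervals where `q ≻ 0`
separated by `m` closed intervals where `q ≺ 0`. -/
def SignCond (q : ℝ → ℝ) (T : ℝ) (m : ℕ) : Prop :=
  ∃ σ : ℕ → ℝ, σ 0 = 0 ∧ σ (2*m) = T ∧ (∀ i < 2*m, σ i < σ (i+1)) ∧
    (∀ i < m, PosOn q (Set.Icc (σ (2*i)) (σ (2*i+1)))) ∧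
    (∀ i < m, PosOn (fun t => - q t) (Set.Icc (σ (2*i+1)) (σ (2*i+2))))

/-- A subharmonic solution of order `k`: `kT`-periodic but not `ℓT`-periodic
for `ℓ = 1, …, k-1`. -/
def IsSubharmonic (u : ℝ → ℝ) (T : ℝ) (k : ℕ) : Prop :=
  Function.Periodic u (k * T) ∧ ∀ ℓ : ℕ, 1 ≤ ℓ → ℓ < k → ¬ Function.Periodic u (ℓ * T)

/-- `u` and `v` belong to the same periodicity class. -/
def SameClass (u v : ℝ → ℝ) (T : ℝ) : Prop :=
  ∃ ℓ : ℤ, ∀ t, v t = u (t + ℓ * T)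

/-!
On an interval where `F(t, u) ≥ 0` a solution is concave. A concave `u` with `0 ≤ u ≤ R` on `[a, b]`
has slope at most `R / ε` in absolute value at distance `ε` from the end points, so the integral of
`F(t, u) = -u''` over `[a + ε, b - ε]` is at most `2R / ε`. If moreover `u` reaches `R`, then
concavity gives `u ≥ εR / (b - a)` on `[a + ε, b - ε]`, where superlinearity makes `q g(u)`
integrate to more than `2R / ε` once `R` is large. So `u` cannot reach a large maximum `R` where
`q ≥ 0`; where `q ≤ 0` and the forcing vanishes it is convex and its maximum is carried to an end
point, which belongs to an interval of the first kind. The same integral bound rules out solutions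
with values in `[0, R]` once the forcing `ν v` has integral more than `2R / ε`.
-/

section Concave

variable {𝕜 : Type*} [Field 𝕜] [LinearOrder 𝕜] [IsStrictOrderedRing 𝕜]

theorem mul_le_apply_lineMap_of_concaveOn {E : Type*} [AddCommGroup E] [Module 𝕜 E] {s : Set E}
    {f : E → 𝕜} (hf : ConcaveOn 𝕜 s f) {x y : E} (hx : x ∈ s) (hy : y ∈ s) (hfx : 0 ≤ f x)
    {θ : 𝕜} (hθ : θ ∈ Icc 0 1) : θ * f y ≤ f (AffineMap.lineMap x y θ) := by
  have hconc := hf.2 hx hy (sub_nonneg.2 hθ.2) hθ.1 (sub_add_cancel 1 θ)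
  rw [← AffineMap.lineMap_apply_module (k := 𝕜) x y θ, smul_eq_mul, smul_eq_mul] at hconc
  exact (le_add_of_nonneg_left (mul_nonneg (sub_nonneg.2 hθ.2) hfx)).trans hconc

theorem div_mul_le_of_concaveOn_Icc {f : 𝕜 → 𝕜} {a b ε x t : 𝕜} (hf : ConcaveOn 𝕜 (Icc a b) f)
    (hf0 : ∀ s ∈ Icc a b, 0 ≤ f s) (hε : 0 < ε) (hx : x ∈ Icc a b)
    (ht : t ∈ Icc (a + ε) (b - ε)) : ε / (b - a) * f x ≤ f t := by
  have hab : a ≤ b := hx.1.trans hx.2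
  have of_lineMap_eq : ∀ e ∈ Icc a b, ∀ θ ∈ Icc 0 1, ε / (b - a) ≤ θ →
      AffineMap.lineMap e x θ = t → ε / (b - a) * f x ≤ f t := fun e he θ hθ hεθ hline =>
    calc ε / (b - a) * f x ≤ θ * f x := mul_le_mul_of_nonneg_right hεθ (hf0 x hx)
      _ ≤ f (AffineMap.lineMap e x θ) := mul_le_apply_lineMap_of_concaveOn hf he hx (hf0 e he) hθ
      _ = f t := by rw [hline]
  obtain ⟨hax, hxb⟩ := hx
  obtain ⟨hat, htb⟩ := ht
  rcases le_total t x with htx | hxt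
  · have hpos : 0 < x - a := by linarith
    refine of_lineMap_eq a (left_mem_Icc.2 hab) ((t - a) / (x - a))
      ⟨div_nonneg (by linarith) hpos.le, (div_le_one hpos).2 (by linarith)⟩
      (div_le_div₀ (by linarith) (by linarith) hpos (by linarith)) ?_
    rw [AffineMap.lineMap_apply_module', smul_eq_mul, div_mul_cancel₀ _ hpos.ne', sub_add_cancel]
  · have hpos : 0 < b - x := by linarith
    refine of_lineMap_eq b (right_mem_Icc.2 hab) ((b - t) / (b - x))
      ⟨div_nonneg (by linarith) hpos.le, (div_le_one hpos).2 (by linarith)⟩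
      (div_le_div₀ (by linarith) (by linarith) hpos (by linarith)) ?_
    rw [AffineMap.lineMap_apply_module', smul_eq_mul, ← neg_sub b x, mul_neg,
      div_mul_cancel₀ _ hpos.ne', neg_sub, sub_add_cancel]

end Concave

theorem intervalIntegrable_of_locallyIntegrable {E : Type*} [NormedAddCommGroup E] {μ : Measure ℝ}
    {f : ℝ → E} (hf : LocallyIntegrable f μ) (a b : ℝ) : IntervalIntegrable f μ a b :=
  (hf.integrableOn_isCompact isCompact_uIcc).intervalIntegrable

theorem locallyIntegrable_max_zero {X : Type*} [MeasurableSpace X] [TopologicalSpace X]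
    {μ : Measure X} {f : X → ℝ} (hf : LocallyIntegrable f μ) :
    LocallyIntegrable (fun x => max (f x) 0) μ := fun x =>
  let ⟨s, hs, hfs⟩ := hf x
  ⟨s, hs, hfs.pos_part⟩

theorem eventually_forall_mul_le_of_tendsto_div_atTop {g : ℝ → ℝ}
    (hg : Tendsto (fun s => g s / s) atTop atTop) {δ C : ℝ} (hδ : 0 < δ) (hC : 0 ≤ C) :
    ∀ᶠ R in atTop, ∀ s, δ * R ≤ s → C * R ≤ g s := by
  obtain ⟨S, hS⟩ := eventually_atTop.1 (hg.eventually_ge_atTop (C / δ))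
  filter_upwards [eventually_gt_atTop 0, eventually_ge_atTop (S / δ)] with R hR hSR s hs
  have hs0 : 0 < s := (mul_pos hδ hR).trans_le hs
  have hSs : S ≤ s := ((div_le_iff₀' hδ).1 hSR).trans hs
  calc C * R = C / δ * (δ * R) := by field_simp
    _ ≤ C / δ * s := by gcongr
    _ ≤ g s := (le_div_iff₀ hs0).1 (hS s hSs)

theorem exists_mem_Ico_eq_iSup_of_periodic {f : ℝ → ℝ} {T : ℝ} (hf : Continuous f)
    (hper : Function.Periodic f T) (hT : 0 < T) :
    ∃ t ∈ Ico 0 T, f t = ⨆ s, f s := by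
  have hcompact : IsCompact (range f) := hper.compact_of_continuous hT.ne' hf
  obtain ⟨s, hs⟩ := hcompact.sSup_mem (range_nonempty f)
  obtain ⟨t, ht, hst⟩ := hper.exists_mem_Ico₀ hT s
  exact ⟨t, ht, hst.symm.trans hs⟩

section Partition

variable {α : Type*} [LinearOrder α] {σ : ℕ → α} {t : α}

theorem exists_mem_Icc_succ {n : ℕ} (hn : 1 ≤ n) (ht : t ∈ Icc (σ 0) (σ n)) :
    ∃ i < n, t ∈ Icc (σ i) (σ (i + 1)) := by
  induction n, hn using Nat.le_induction with
  | base => exact ⟨0, zero_lt_one, ht⟩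
  | succ n _ ih =>
    rcases le_total t (σ n) with htn | htn
    · obtain ⟨i, hi, hti⟩ := ih ⟨ht.1, htn⟩
      exact ⟨i, hi.trans n.lt_succ_self, hti⟩
    · exact ⟨n, n.lt_succ_self, htn, ht.2⟩

theorem exists_le_mem_even_Icc {β : Type*} [LinearOrder β] {u : α → β} {m : ℕ} (hm : 1 ≤ m)
    (hσ : ∀ i < 2 * m, σ i ≤ σ (i + 1)) (hend : u (σ (2 * m)) = u (σ 0))
    (hodd : ∀ i < m, ∀ s ∈ Icc (σ (2 * i + 1)) (σ (2 * i + 2)),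
      u s ≤ max (u (σ (2 * i + 1))) (u (σ (2 * i + 2))))
    (ht : t ∈ Icc (σ 0) (σ (2 * m))) :
    ∃ i < m, ∃ s ∈ Icc (σ (2 * i)) (σ (2 * i + 1)), u t ≤ u s := by
  obtain ⟨i, hi, hti⟩ := exists_mem_Icc_succ (by lia) ht
  rcases Nat.even_or_odd' i with ⟨j, rfl | rfl⟩
  · exact ⟨j, by lia, t, hti, le_rfl⟩
  · have hj : j < m := by lia
    rcases le_max_iff.1 (hodd j hj t hti) with hleft | hright
    · exact ⟨j, hj, _, right_mem_Icc.2 (hσ _ (by lia)), hleft⟩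
    · rcases (Nat.succ_le_of_lt hj).lt_or_eq with hlt | rfl
      · exact ⟨j + 1, hlt, _, left_mem_Icc.2 (hσ _ (by lia)), hright⟩
      · exact ⟨0, hm, σ 0, left_mem_Icc.2 (hσ 0 (by lia)), hright.trans_eq hend⟩

end Partition

namespace PosOn

theorem max_zero {q : ℝ → ℝ} {I : Set ℝ} (hq : PosOn q I) : PosOn (fun t => max (q t) 0) I := by
  refine ⟨ae_of_all _ fun t => le_max_right _ _, fun hzero => hq.2 ?_⟩
  filter_upwards [hq.1, hzero] with t ht hmax
  rwa [max_eq_left ht] at hmax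

variable {q : ℝ → ℝ} {a b : ℝ}

theorem integral_pos (hq : PosOn q (Icc a b)) (hab : a ≤ b)
    (hint : IntervalIntegrable q volume a b) : 0 < ∫ t in a..b, q t := by
  refine (intervalIntegral.integral_nonneg_of_ae_restrict hab hq.1).lt_of_ne' fun hzero => hq.2 ?_
  have hnonneg := hq.1
  rw [← restrict_Ioc_eq_restrict_Icc] at hnonneg ⊢
  exact (intervalIntegral.integral_eq_zero_iff_of_le_of_nonneg_ae hab hnonneg hint).1 hzero

theorem exists_integral_pos (hq : PosOn q (Icc a b)) (hab : a < b)
    (hloc : LocallyIntegrable q volume) :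
    ∃ ε > 0, a + ε ≤ b - ε ∧ 0 < ∫ t in (a + ε)..(b - ε), q t := by
  have hint := intervalIntegrable_of_locallyIntegrable hloc
  have hcont : Continuous fun ε : ℝ => ∫ t in (a + ε)..(b - ε), q t := by
    have hprim := intervalIntegral.continuous_primitive hint 0
    have hsub : (fun ε => ∫ t in (a + ε)..(b - ε), q t) =
        fun ε => (∫ t in (0 : ℝ)..(b - ε), q t) - ∫ t in (0 : ℝ)..(a + ε), q t :=
      funext fun ε => (intervalIntegral.integral_interval_sub_left (hint _ _) (hint _ _)).symm
    rw [hsub]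
    exact (hprim.comp (continuous_sub_left b)).sub (hprim.comp (continuous_const_add a))
  have hpos : ∀ᶠ ε in nhds (0 : ℝ), 0 < ∫ t in (a + ε)..(b - ε), q t :=
    hcont.continuousAt.eventually_const_lt (by simpa using hq.integral_pos hab.le (hint a b))
  have hsmall : ∀ᶠ ε in nhds (0 : ℝ), ε < (b - a) / 2 := eventually_lt_nhds (by linarith)
  obtain ⟨ε, ⟨hQ, hεlt⟩, hε⟩ :=
    (((hpos.and hsmall).filter_mono nhdsWithin_le_nhds).and
      (eventually_mem_nhdsWithin (s := Ioi (0 : ℝ)))).exists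
  exact ⟨ε, hε, by linarith, hQ⟩

end PosOn

namespace IsSol

variable {F : ℝ → ℝ → ℝ} {u : ℝ → ℝ} {a b : ℝ}

theorem differentiable (hu : IsSol F u) : Differentiable ℝ u :=
  let ⟨_, hderiv, _⟩ := hu
  fun t => (hderiv t).differentiableAt

theorem locallyIntegrable (hu : IsSol F u) : LocallyIntegrable (fun t => F t (u t)) volume :=
  let ⟨_, _, hloc, _⟩ := hu
  hloc

theorem neg (hu : IsSol F u) : IsSol (fun t s => -F t (-s)) (-u) := by
  obtain ⟨u', hderiv, hloc, hu'⟩ := hu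
  refine ⟨-u', fun t => (hderiv t).neg, ?_, fun t => ?_⟩
  · simp only [Pi.neg_apply, neg_neg]
    exact hloc.neg
  · simp only [Pi.neg_apply, neg_neg, intervalIntegral.integral_neg, hu' t]
    ring

theorem integral_eq_deriv_sub (hu : IsSol F u) (a b : ℝ) :
    ∫ t in a..b, F t (u t) = deriv u a - deriv u b := by
  have hint := intervalIntegrable_of_locallyIntegrable hu.locallyIntegrable
  obtain ⟨u', hderiv, -, hu'⟩ := hu
  rw [← intervalIntegral.integral_interval_sub_left (hint 0 b) (hint 0 a), (hderiv a).deriv,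
    (hderiv b).deriv, hu' a, hu' b]
  ring

theorem concaveOn (hu : IsSol F u) (hF : ∀ᵐ t ∂volume.restrict (Icc a b), 0 ≤ F t (u t)) :
    ConcaveOn ℝ (Icc a b) u := by
  have hanti : AntitoneOn (deriv u) (Icc a b) := fun x hx y hy hxy => by
    rw [← sub_nonneg, ← hu.integral_eq_deriv_sub]
    exact intervalIntegral.integral_nonneg_of_ae_restrict hxy
      (ae_restrict_of_ae_restrict_of_subset (Icc_subset_Icc hx.1 hy.2) hF)
  exact (hanti.mono interior_subset).concaveOn_of_deriv (convex_Icc a b)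
    hu.differentiable.continuous.continuousOn hu.differentiable.differentiableOn

theorem convexOn (hu : IsSol F u) (hF : ∀ᵐ t ∂volume.restrict (Icc a b), F t (u t) ≤ 0) :
    ConvexOn ℝ (Icc a b) u := by
  refine neg_concaveOn_iff.1 (hu.neg.concaveOn ?_)
  filter_upwards [hF] with t ht
  simpa using ht

theorem integral_le (hu : IsSol F u) (hF : ∀ᵐ t ∂volume.restrict (Icc a b), 0 ≤ F t (u t))
    {R ε : ℝ} (huR : ∀ t ∈ Icc a b, u t ∈ Icc 0 R) (hε : 0 < ε) (hab : a + ε ≤ b - ε) :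
    ∫ t in (a + ε)..(b - ε), F t (u t) ≤ 2 * R / ε := by
  have hconc := hu.concaveOn hF
  have ha : a ∈ Icc a b := ⟨le_rfl, by linarith⟩
  have hb : b ∈ Icc a b := ⟨by linarith, le_rfl⟩
  have haε : a + ε ∈ Icc a b := ⟨by linarith, by linarith⟩
  have hbε : b - ε ∈ Icc a b := ⟨by linarith, by linarith⟩
  have hleft : deriv u (a + ε) ≤ R / ε := by
    refine (hconc.deriv_le_slope ha haε (by linarith) (hu.differentiable _)).trans ?_
    rw [slope_def_field, add_sub_cancel_left]
    gcongr
    linarith [(huR a ha).1, (huR _ haε).2]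
  have hright : -(R / ε) ≤ deriv u (b - ε) := by
    refine le_trans ?_ (hconc.slope_le_deriv hbε hb (by linarith) (hu.differentiable _))
    rw [slope_def_field, sub_sub_cancel, ← neg_div]
    gcongr
    linarith [(huR b hb).1, (huR _ hbε).2]
  calc ∫ t in (a + ε)..(b - ε), F t (u t) = deriv u (a + ε) - deriv u (b - ε) :=
        hu.integral_eq_deriv_sub _ _
    _ ≤ R / ε - -(R / ε) := sub_le_sub hleft hright
    _ = 2 * R / ε := by ring

theorem mul_integral_le (hu : IsSol F u) (hF : ∀ᵐ t ∂volume.restrict (Icc a b), 0 ≤ F t (u t))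
    {R ε : ℝ} (huR : ∀ t ∈ Icc a b, u t ∈ Icc 0 R) (hε : 0 < ε) (hab : a + ε ≤ b - ε)
    {c : ℝ} {w : ℝ → ℝ} (hw : LocallyIntegrable w volume)
    (hwF : ∀ᵐ t ∂volume.restrict (Icc (a + ε) (b - ε)), c * w t ≤ F t (u t)) :
    c * ∫ t in (a + ε)..(b - ε), w t ≤ 2 * R / ε := by
  refine le_trans ?_ (hu.integral_le hF huR hε hab)
  rw [← intervalIntegral.integral_const_mul]
  exact intervalIntegral.integral_mono_ae_restrict hab
    ((intervalIntegrable_of_locallyIntegrable hw _ _).const_mul c)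
    (intervalIntegrable_of_locallyIntegrable hu.locallyIntegrable _ _) hwF

end IsSol

section Superlinear

variable {q g : ℝ → ℝ} {a b : ℝ}

theorem eventually_forall_isSol_lt_of_posOn (hab : a < b) (hqloc : LocallyIntegrable q volume)
    (hq : PosOn q (Icc a b)) (hg : ∀ s, 0 ≤ s → 0 ≤ g s)
    (hgsup : Tendsto (fun s => g s / s) atTop atTop) :
    ∀ᶠ R in atTop, ∀ p : ℝ → ℝ, (∀ t, 0 ≤ p t) → ∀ u, IsSol (fun t s => q t * g s + p t) u →
      (∀ t ∈ Icc a b, u t ∈ Icc 0 R) → ∀ t ∈ Icc a b, u t < R := by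
  obtain ⟨ε, hε, hεab, hQ⟩ := hq.exists_integral_pos hab hqloc
  set Q := ∫ t in (a + ε)..(b - ε), q t
  have hba : 0 < b - a := sub_pos.2 hab
  filter_upwards [eventually_gt_atTop 0, eventually_forall_mul_le_of_tendsto_div_atTop hgsup
    (div_pos hε hba) (C := 3 / (ε * Q)) (by positivity)] with R hR hgR p hp u hu huR t₀ ht₀
  refine (huR t₀ ht₀).2.lt_of_ne fun hut₀ => ?_
  have hF : ∀ᵐ t ∂volume.restrict (Icc a b), 0 ≤ q t * g (u t) + p t := by
    filter_upwards [hq.1, ae_restrict_mem measurableSet_Icc] with t hqt ht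
    exact add_nonneg (mul_nonneg hqt (hg _ (huR t ht).1)) (hp t)
  have hlow : ∀ᵐ t ∂volume.restrict (Icc (a + ε) (b - ε)),
      3 / (ε * Q) * R * q t ≤ q t * g (u t) + p t := by
    filter_upwards [ae_restrict_mem measurableSet_Icc, ae_restrict_of_ae_restrict_of_subset
      (Icc_subset_Icc (by linarith) (by linarith)) hq.1] with t ht hqt
    have hut : ε / (b - a) * R ≤ u t := hut₀ ▸
      div_mul_le_of_concaveOn_Icc (hu.concaveOn hF) (fun s hs => (huR s hs).1) hε ht₀ ht
    linarith [mul_le_mul_of_nonneg_left (hgR _ hut) hqt, hp t]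
  have hbound := hu.mul_integral_le hF huR hε hεab hqloc hlow
  have hconst : 3 / (ε * Q) * R * Q = 3 * R / ε := by field_simp
  rw [hconst, div_le_div_iff_of_pos_right hε] at hbound
  linarith

theorem eventually_not_isSol_mem_Icc {v : ℝ → ℝ} (hab : a < b)
    (hq : ∀ᵐ t ∂volume.restrict (Icc a b), 0 ≤ q t) (hg : ∀ s, 0 ≤ s → 0 ≤ g s)
    (hvloc : LocallyIntegrable v volume) (hv : PosOn v (Icc a b)) (R : ℝ) :
    ∀ᶠ ν in atTop, ¬ ∃ u, IsSol (fun t s => q t * g s + ν * v t) u ∧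
      ∀ t ∈ Icc a b, u t ∈ Icc 0 R := by
  obtain ⟨ε, hε, hεab, hV⟩ := hv.exists_integral_pos hab hvloc
  filter_upwards [eventually_ge_atTop 0,
    eventually_gt_atTop (2 * R / ε / ∫ t in (a + ε)..(b - ε), v t)] with ν hν hνR
  rintro ⟨u, hu, huR⟩
  have hqg : ∀ᵐ t ∂volume.restrict (Icc a b), 0 ≤ q t * g (u t) := by
    filter_upwards [hq, ae_restrict_mem measurableSet_Icc] with t hqt ht
    exact mul_nonneg hqt (hg _ (huR t ht).1)
  have hF : ∀ᵐ t ∂volume.restrict (Icc a b), 0 ≤ q t * g (u t) + ν * v t := by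
    filter_upwards [hqg, hv.1] with t hqgt hvt
    exact add_nonneg hqgt (mul_nonneg hν hvt)
  have hlow : ∀ᵐ t ∂volume.restrict (Icc (a + ε) (b - ε)), ν * v t ≤ q t * g (u t) + ν * v t := by
    filter_upwards [ae_restrict_of_ae_restrict_of_subset
      (Icc_subset_Icc (by linarith) (by linarith)) hqg] with t hqgt
    exact le_add_of_nonneg_left hqgt
  exact ((div_lt_iff₀ hV).1 hνR).not_ge (hu.mul_integral_le hF huR hε hεab hvloc hlow)

theorem SignCond.one_le {T : ℝ} {m : ℕ} (hT : 0 < T) (hq : SignCond q T m) : 1 ≤ m := by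
  obtain ⟨σ, hσ0, hσT, -⟩ := hq
  refine Nat.one_le_iff_ne_zero.2 ?_
  rintro rfl
  exact hT.ne' (hσT.symm.trans hσ0)

theorem SignCond.eventually_iSup_abs_ne {T : ℝ} {m : ℕ} (hT : 0 < T) (hq : SignCond q T m)
    (hqloc : LocallyIntegrable q volume) (hg : ∀ s, 0 ≤ s → 0 ≤ g s)
    (hgsup : Tendsto (fun s => g s / s) atTop atTop) :
    ∀ᶠ R in atTop, ∀ p : ℝ → ℝ, (∀ t, 0 ≤ p t) → (∀ t, q t ≤ 0 → p t = 0) →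
      ∀ u, IsSol (fun t s => q t * g s + p t) u → (∀ t, 0 ≤ u t) → Function.Periodic u T →
        (⨆ t, |u t|) ≠ R := by
  have hm : 1 ≤ m := hq.one_le hT
  obtain ⟨σ, hσ0, hσT, hσ, hpos, hneg⟩ := hq
  have hlt := (eventually_all_finite (finite_lt_nat m)).2 fun i (hi : i < m) =>
    eventually_forall_isSol_lt_of_posOn (hσ (2 * i) (by lia)) hqloc (hpos i hi) hg hgsup
  filter_upwards [hlt] with R hR p hp hpq u hu hu0 hper hsup
  simp only [abs_of_nonneg (hu0 _)] at hsup
  have hcont : Continuous u := hu.differentiable.continuous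
  have huR : ∀ t, u t ∈ Icc 0 R := fun t =>
    ⟨hu0 t, hsup ▸ le_ciSup (hper.compact_of_continuous hT.ne' hcont).bddAbove t⟩
  obtain ⟨t, ht, hut⟩ := exists_mem_Ico_eq_iSup_of_periodic hcont hper hT
  have hodd : ∀ i < m, ∀ s ∈ Icc (σ (2 * i + 1)) (σ (2 * i + 2)),
      u s ≤ max (u (σ (2 * i + 1))) (u (σ (2 * i + 2))) := by
    intro i hi s hs
    have hF : ∀ᵐ t ∂volume.restrict (Icc (σ (2 * i + 1)) (σ (2 * i + 2))),
        q t * g (u t) + p t ≤ 0 := by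
      filter_upwards [(hneg i hi).1] with t hqt
      have hqt : q t ≤ 0 := neg_nonneg.1 hqt
      rw [hpq t hqt, add_zero]
      exact mul_nonpos_of_nonpos_of_nonneg hqt (hg _ (hu0 t))
    have hle := hs.1.trans hs.2
    exact (hu.convexOn hF).le_max_of_mem_Icc (left_mem_Icc.2 hle) (right_mem_Icc.2 hle) hs
  obtain ⟨i, hi, s, hs, hts⟩ := exists_le_mem_even_Icc hm (fun i hi => (hσ i hi).le)
    (by rw [hσT, hσ0, hper.eq]) hodd (t := t) (by rw [hσT, hσ0]; exact Ico_subset_Icc_self ht)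
  exact (hR i hi p hp u hu (fun t _ => huR t) s hs).not_ge ((hut.trans hsup).symm.trans_le hts)

end Superlinear

theorem stmt16_general {T : ℝ} (hT : 0 < T) {q : ℝ → ℝ} (hqper : Function.Periodic q T)
    (hqloc : LocallyIntegrable q volume) {m : ℕ} (hq : SignCond q T m)
    {g : ℝ → ℝ} (hg : ∀ s, 0 ≤ s → 0 ≤ g s) (hgsup : Tendsto (fun s => g s / s) atTop atTop) :
    ∃ v : ℝ → ℝ, (∀ t, 0 ≤ v t) ∧ Function.Periodic v T ∧ LocallyIntegrable v volume ∧
      ¬ (∀ᵐ t, v t = 0) ∧ ∀ᶠ R in atTop,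
        (∀ ν : ℝ, 0 ≤ ν → ∀ u : ℝ → ℝ, IsSol (fun t s => q t * g s + ν * v t) u →
          (∀ t, 0 ≤ u t) → Function.Periodic u T → (⨆ t, |u t|) ≠ R) ∧
        ∃ ν₀ : ℝ, 0 < ν₀ ∧ ∀ ν ≥ ν₀, ¬ ∃ u : ℝ → ℝ,
          IsSol (fun t s => q t * g s + ν * v t) u ∧ ∀ t, u t ∈ Icc 0 R := by
  have hm : 1 ≤ m := hq.one_le hT
  have hsup := hq.eventually_iSup_abs_ne hT hqloc hg hgsup
  obtain ⟨σ, -, -, hσ, hpos, -⟩ := hq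
  have hpos₀ : PosOn q (Icc (σ 0) (σ 1)) := hpos 0 hm
  have hvloc := locallyIntegrable_max_zero hqloc
  refine ⟨fun t => max (q t) 0, fun t => le_max_right _ _, hqper.comp (max · 0), hvloc,
    fun hzero => hpos₀.max_zero.2 (ae_restrict_of_ae hzero), ?_⟩
  filter_upwards [hsup] with R hR
  refine ⟨fun ν hν => hR _ (fun t => mul_nonneg hν (le_max_right _ _)) fun t ht => ?_, ?_⟩
  · rw [max_eq_right ht, mul_zero]
  · have hno := eventually_not_isSol_mem_Icc (hσ 0 (by lia)) hpos₀.1 hg hvloc hpos₀.max_zero R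
    obtain ⟨N, hN⟩ := eventually_atTop.1 hno
    exact ⟨max N 1, by positivity, fun ν hν ⟨u, hu, huR⟩ =>
      hN ν ((le_max_left N 1).trans hν) ⟨u, hu, fun t _ => huR t⟩⟩

/-- large ball a priori bound: since `g(s)/s → +∞`, for every `r > 0`
there are `R > r`, a nonnegative nontrivial `T`-periodic weight `v` and `ν₀ > 0` such that
(i) no nonnegative `T`-periodic solution of `u'' + q(t)g(u) + ν v(t) = 0`, `ν ∈ [0,ν₀]`,
has sup-norm `R`, and (ii) for `ν = ν₀` there is no `T`-periodic solution with
`0 ≤ u ≤ R`. -/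
theorem stmt16 (T : ℝ) (hT : 0 < T) (q : ℝ → ℝ)
    (hqper : Function.Periodic q T)
    (hqloc : MeasureTheory.LocallyIntegrable q MeasureTheory.volume)
    (m : ℕ) (hm : 1 ≤ m) (hqsign : SignCond q T m)
    (g : ℝ → ℝ) (hgC1 : ContDiffOn ℝ 1 g (Set.Ici 0))
    (hg0 : g 0 = 0) (hgpos : ∀ s : ℝ, 0 < s → 0 < g s)
    (hgsup : Filter.Tendsto (fun s => g s / s) Filter.atTop Filter.atTop) :
    ∀ r : ℝ, 0 < r →
      ∃ R : ℝ, r < R ∧ ∃ v : ℝ → ℝ, ∃ ν₀ : ℝ, 0 < ν₀ ∧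
        (∀ t, 0 ≤ v t) ∧ Function.Periodic v T ∧
        MeasureTheory.LocallyIntegrable v MeasureTheory.volume ∧
        ¬ (∀ᵐ t ∂MeasureTheory.volume, v t = 0) ∧
        (∀ ν : ℝ, 0 ≤ ν → ν ≤ ν₀ → ∀ u : ℝ → ℝ,
          IsSol (fun t s => q t * g s + ν * v t) u →
          (∀ t, 0 ≤ u t) → Function.Periodic u T →
          (⨆ t : ℝ, |u t|) ≠ R) ∧
        ¬ ∃ u : ℝ → ℝ,
            IsSol (fun t s => q t * g s + ν₀ * v t) u ∧
            Function.Periodic u T ∧ ∀ t, u t ∈ Set.Icc (0:ℝ) R := by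
  intro r _
  obtain ⟨v, hv0, hvper, hvloc, hvne, hv⟩ := stmt16_general hT hqper hqloc hqsign
    (fun s hs => hs.eq_or_lt.elim (fun h => h ▸ hg0.ge) fun h => (hgpos s h).le) hgsup
  obtain ⟨R, ⟨hsup, ν₀, hν₀, hno⟩, hrR⟩ := (hv.and (eventually_gt_atTop r)).exists
  exact ⟨R, hrR, v, ν₀, hν₀, hv0, hvper, hvloc, hvne, fun ν hν _ => hsup ν hν,
    fun ⟨u, hu, _, huR⟩ => hno ν₀ le_rfl ⟨u, hu, huR⟩⟩
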